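/- In the setting of Maskit's dividing-loop construction (G a non-degenerate B-group, G₁, G₂ ≤ G, fundamental sets D, D₁, D₂ with D − Δ₀ = (D₁ − Δ₀₁*) + (D₂ − Δ₀₂*)), for every non-invariant component Δ of Ω(G_i) different from Δ₀ᵢ* (i = 1 or 2), the stabilizer of Δ in G coincides with its stabilizer in G_i: G_Δ = G_{i,Δ}. In particular, two points x₁, x₂ ∈ Δ are G-equivalent if and only if they are G_i-equivalent. -/

import Mathlib

open Topology Set

noncomputable section

/-! ### Generalities: groups of homeomorphisms -/

/-- The group of self-homeomorphisms of a topological space, with `(f * g) x = f (g x)`. -/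
instance homeomorphGroup {X : Type*} [TopologicalSpace X] : Group (X ≃ₜ X) where
  mul f g := g.trans f
  one := Homeomorph.refl X
  inv := Homeomorph.symm
  mul_assoc a b c := Homeomorph.ext fun _ => rfl
  one_mul a := Homeomorph.ext fun _ => rfl
  mul_one a := Homeomorph.ext fun _ => rfl
  inv_mul_cancel a := Homeomorph.ext fun x => a.symm_apply_apply x

@[simp] lemma homeomorph_one_apply {X : Type*} [TopologicalSpace X] (x : X) :
    (1 : X ≃ₜ X) x = x := rfl

@[simp] lemma homeomorph_mul_apply {X : Type*} [TopologicalSpace X] (f g : X ≃ₜ X) (x : X) :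
    (f * g) x = f (g x) := rfl

@[simp] lemma homeomorph_inv_apply {X : Type*} [TopologicalSpace X] (f : X ≃ₜ X) (x : X) :
    (f⁻¹ : X ≃ₜ X) x = f.symm x := rfl

/-- The setwise stabilizer of a subset under a subgroup of homeomorphisms. -/
def setStab {X : Type*} [TopologicalSpace X] (G : Subgroup (X ≃ₜ X)) (A : Set X) :
    Subgroup (X ≃ₜ X) where
  carrier := {g | g ∈ G ∧ g '' A = A}
  one_mem' := ⟨G.one_mem, by ext x; simp⟩
  mul_mem' := by
    rintro g h ⟨hg, hgA⟩ ⟨hh, hhA⟩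
    refine ⟨G.mul_mem hg hh, ?_⟩
    have : ⇑(g * h) = ⇑g ∘ ⇑h := rfl
    rw [this, Set.image_comp, hhA, hgA]
  inv_mem' := by
    rintro g ⟨hg, hgA⟩
    refine ⟨G.inv_mem hg, ?_⟩
    conv_lhs => rw [← hgA]
    have : ⇑(g⁻¹ : X ≃ₜ X) = ⇑g.symm := rfl
    rw [this, ← Set.image_comp]
    simp

/-- The orbit of a point under a subgroup of homeomorphisms. -/
def orbitOf {X : Type*} [TopologicalSpace X] (G : Subgroup (X ≃ₜ X)) (x : X) : Set X :=
  {y | ∃ g ∈ G, g x = y}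

/-! ### Lifts along covering maps, Galois coverings artifact, holonomy -/

/-- `L` is a lift of the path `γ : [0,1] → B` through `p : A → B` from `x` to `y`. -/
def LiftsTo {E : Type*} [TopologicalSpace E] (A : Set E) {B : Type*} [TopologicalSpace B]
    (p : C(A, B)) (γ : C(unitInterval, B)) (x y : A) : Prop :=
  ∃ L : C(unitInterval, A), (∀ t, p (L t) = γ t) ∧ L 0 = x ∧ L 1 = y

/-- `p : A → B` is a Galois (regular) covering with deck transformation group (the restriction
of) `G`, a group of homeomorphisms of the ambient space `E` leaving `A` invariant. -/
structure IsGaloisCoveringOn {E : Type*} [TopologicalSpace E] (G : Subgroup (E ≃ₜ E))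
    (A : Set E) {B : Type*} [TopologicalSpace B] (p : C(A, B)) : Prop where
  invariant : ∀ g ∈ G, g '' A = A
  covering : IsCoveringMap p
  deck : ∀ (g : E ≃ₜ E), g ∈ G → ∀ (x : A) (hx : g ↑x ∈ A), p ⟨g ↑x, hx⟩ = p x
  transitive : ∀ x y : A, p x = p y → ∃ g ∈ G, g ↑x = ↑y
  free : ∀ g ∈ G, (∃ x : A, g ↑x = ↑x) → g = 1

/-- `p` is a universal Galois covering: a Galois covering with simply connected total space. -/
structure IsUniversalGaloisCoveringOn {E : Type*} [TopologicalSpace E] (G : Subgroup (E ≃ₜ E))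
    (A : Set E) {B : Type*} [TopologicalSpace B] (p : C(A, B))
    extends IsGaloisCoveringOn G A p : Prop where
  simplyConnected : SimplyConnectedSpace A

/-- The set of deck transformations in `G` arising (via path lifting from the base point `O`)
as the holonomy `h_O (γ)` of loops `γ` based at `p O` whose image is contained in `W`.
This set is the formal rendering of the image `h_O (π₁ (W, p O))` of the natural
homomorphism `h_O` determined by path lifting from `O`. -/
def holSet {E : Type*} [TopologicalSpace E] (G : Subgroup (E ≃ₜ E)) (A : Set E)
    {B : Type*} [TopologicalSpace B] (p : C(A, B)) (O : A) (W : Set B) : Set (E ≃ₜ E) :=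
  {g | g ∈ G ∧ ∃ γ : C(unitInterval, B), γ 0 = p O ∧ γ 1 = p O ∧ (∀ t, γ t ∈ W) ∧
      ∃ y : A, LiftsTo A p γ O y ∧ (↑y : E) = g ↑O}

/-! ### The Riemann sphere and Möbius transformations -/

/-- The Riemann sphere, as the one-point compactification of `ℂ`. -/
abbrev RSphere : Type := OnePoint ℂ

/-- Homeomorphisms of the Riemann sphere. -/
abbrev SphereHomeo : Type := RSphere ≃ₜ RSphere

/-- Standard coordinate: the chart of the sphere at finite points (junk value `0` at `∞`). -/
def sval : RSphere → ℂ := fun z => OnePoint.rec 0 id z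

/-- Inverted coordinate `1/z`: the chart of the sphere at `∞` (junk value at `0`). -/
def svalInv : RSphere → ℂ := fun z => OnePoint.rec 0 (fun w => w⁻¹) z


open scoped Classical in
/-- The standard chart of the Riemann sphere at a point `p`. -/
def schart (p : RSphere) : RSphere → ℂ :=
  if p = (OnePoint.infty : RSphere) then svalInv else sval

/-- `f` is the Möbius transformation with coefficient matrix `(a b; c d)`. -/
def MoebiusCoeffs (a b c d : ℂ) (f : SphereHomeo) : Prop :=
  a * d - b * c ≠ 0 ∧
    ∀ z : ℂ, c * z + d ≠ 0 → f (z : RSphere) = (((a * z + b) / (c * z + d) : ℂ) : RSphere)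

/-- A homeomorphism of the Riemann sphere is a Möbius transformation if it is given by a
fractional linear map. -/
def IsMoebius (f : SphereHomeo) : Prop := ∃ a b c d : ℂ, MoebiusCoeffs a b c d f

/-- A parabolic Möbius transformation: one that is not the identity and has exactly one
fixed point on the sphere. -/
def IsParabolic (f : SphereHomeo) : Prop :=
  IsMoebius f ∧ f ≠ 1 ∧ ∃! z : RSphere, f z = z

/-- Two subgroups of sphere homeomorphisms are conjugate by a Möbius transformation. -/
def MoebiusConjugate (G G' : Subgroup SphereHomeo) : Prop :=
  ∃ M : SphereHomeo, IsMoebius M ∧ G' = Subgroup.map (MulAut.conj M).toMonoidHom G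

/-! ### Kleinian groups -/

/-- The region of discontinuity `Ω(G)`: the set of points possessing a neighbourhood met by
only finitely many of its `G`-translates. -/
def discRegion (G : Subgroup SphereHomeo) : Set RSphere :=
  {z | ∃ U : Set RSphere, IsOpen U ∧ z ∈ U ∧
      {g : SphereHomeo | g ∈ G ∧ ((g '' U) ∩ U).Nonempty}.Finite}

/-- A (finitely generated, torsion free) Kleinian group. -/
structure IsKleinian (G : Subgroup SphereHomeo) : Prop where
  moebius : ∀ g ∈ G, IsMoebius g
  finitelyGenerated : Group.FG G
  torsionFree : ∀ g ∈ G, ∀ n : ℕ, 0 < n → g ^ n = 1 → g = 1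
  discNonempty : (discRegion G).Nonempty

/-- `Δ` is a component (connected component of the discontinuity region) of `G`. -/
def IsComponentOf (G : Subgroup SphereHomeo) (Δ : Set RSphere) : Prop :=
  ∃ z ∈ discRegion G, Δ = connectedComponentIn (discRegion G) z

/-- `Δ` is invariant under `G`. -/
def IsGInvariant (G : Subgroup SphereHomeo) (Δ : Set RSphere) : Prop :=
  ∀ g ∈ G, g '' Δ = Δ

/-- A B-group: a Kleinian group whose discontinuity region contains an invariant component
homeomorphic to a disc; the cyclic group generated by a parabolic transformation
is excluded, so that the invariant component is conformally equivalent to the unit disc. -/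
structure IsBGroup (G : Subgroup SphereHomeo) (Δ₀ : Set RSphere) : Prop where
  kleinian : IsKleinian G
  component : IsComponentOf G Δ₀
  invariant : IsGInvariant G Δ₀
  disc : Nonempty (Δ₀ ≃ₜ (Metric.ball (0:ℂ) 1))
  notParabolicCyclic : ¬ ∃ f : SphereHomeo, IsParabolic f ∧ G = Subgroup.closure {f}

/-- A fundamental set for `G` in its discontinuity region: a set meeting each orbit of
`Ω(G)` exactly once. -/
def IsFundamentalSet (G : Subgroup SphereHomeo) (D : Set RSphere) : Prop :=
  D ⊆ discRegion G ∧ ∀ x ∈ discRegion G, ∃! y, y ∈ D ∧ ∃ g ∈ G, g x = y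

/-! ### Holomorphy on the sphere and on charted surfaces -/

/-- A map from a subset of the Riemann sphere to the Riemann sphere is holomorphic if,
read in the standard charts, it is locally given by an analytic function. -/
def SphHolomorphicOn (A : Set RSphere) (f : A → RSphere) : Prop :=
  Continuous f ∧ ∀ x : A, ∃ g : ℂ → ℂ, AnalyticAt ℂ g (schart ↑x ↑x) ∧
    ∀ᶠ y : A in nhds x, schart (f x) (f y) = g (schart (↑x : RSphere) ↑y)

/-- A map from a subset of the Riemann sphere to a surface with complex charts
is holomorphic if, read in charts, it is locally given by an analytic function. -/
def SphHolomorphicToCharted {B : Type*} [TopologicalSpace B] (cB : ChartedSpace ℂ B)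
    (A : Set RSphere) (f : C(A, B)) : Prop :=
  ∀ x : A, ∃ g : ℂ → ℂ, AnalyticAt ℂ g (schart ↑x ↑x) ∧
    ∀ᶠ y : A in nhds x, (cB.chartAt (f x)) (f y) = g (schart (↑x : RSphere) ↑y)

/-- A map between two spaces endowed with complex charts is holomorphic if, read in the
charts, it is locally given by an analytic function. -/
def HolomorphicBetween {X Y : Type*} [TopologicalSpace X] [TopologicalSpace Y]
    (cX : ChartedSpace ℂ X) (cY : ChartedSpace ℂ Y) (f : X → Y) : Prop :=
  Continuous f ∧ ∀ x : X, ∃ g : ℂ → ℂ, AnalyticAt ℂ g (cX.chartAt x x) ∧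
    ∀ᶠ y in nhds x, (cY.chartAt (f x)) (f y) = g (cX.chartAt x y)

/-- A biholomorphic map (conformal isomorphism) between charted surfaces. -/
def BiholomorphicWith {X Y : Type*} [TopologicalSpace X] [TopologicalSpace Y]
    (cX : ChartedSpace ℂ X) (cY : ChartedSpace ℂ Y) (f : X ≃ₜ Y) : Prop :=
  HolomorphicBetween cX cY f ∧ HolomorphicBetween cY cX f.symm

/-! ### Orientation reversal (via the local degree on small circles) -/

/-- Two free loops in `ℂ` are freely homotopic within the subset `A` of `ℂ`. -/
def FreeLoopHomotopicIn (A : Set ℂ) (f g : Circle → ℂ) : Prop :=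
  ∃ (F G : C(Circle, A)), (∀ u, (↑(F u) : ℂ) = f u) ∧ (∀ u, (↑(G u) : ℂ) = g u) ∧
    F.Homotopic G

/-- The local chart representative of a map between charted surfaces at a point. -/
def chartMap {X Y : Type*} [TopologicalSpace X] [TopologicalSpace Y]
    (cX : ChartedSpace ℂ X) (cY : ChartedSpace ℂ Y) (f : X → Y) (x : X) : ℂ → ℂ :=
  fun z => cY.chartAt (f x) (f ((cX.chartAt x).symm z))

/-- A map between charted surfaces reverses orientation at `x` if, read in charts, the image
of every sufficiently small circle around `x` winds around the image point in the negative
sense, i.e. is freely homotopic in the punctured plane to a small clockwise circle.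
This is the formal rendering of ``the map reverses the orientation induced by the complex
structures''. -/
def ReversesOrientationAt {X Y : Type*} [TopologicalSpace X] [TopologicalSpace Y]
    (cX : ChartedSpace ℂ X) (cY : ChartedSpace ℂ Y) (f : X → Y) (x : X) : Prop :=
  ∀ᶠ (r : ℝ) in nhdsWithin (0:ℝ) (Set.Ioi (0:ℝ)), ∃ s : ℝ, 0 < s ∧
    FreeLoopHomotopicIn {w : ℂ | w ≠ chartMap cX cY f x (cX.chartAt x x)}
      (fun u => chartMap cX cY f x (cX.chartAt x x + (r : ℂ) * (u : ℂ)))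
      (fun u => chartMap cX cY f x (cX.chartAt x x) + (s : ℂ) * (starRingEnd ℂ (u : ℂ)))

/-- A map between charted surfaces reverses orientation. -/
def ReversesOrientation {X Y : Type*} [TopologicalSpace X] [TopologicalSpace Y]
    (cX : ChartedSpace ℂ X) (cY : ChartedSpace ℂ Y) (f : X → Y) : Prop :=
  ∀ x, ReversesOrientationAt cX cY f x

/-- Reversal (orientation reversal) of a free loop. -/
def loopReverse {S : Type*} [TopologicalSpace S] (γ : C(Circle, S)) : C(Circle, S) :=
  γ.comp ⟨fun u => u⁻¹, continuous_inv⟩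

/-- A free loop is peripheral (bounds a punctured disc / surrounds a puncture) if it is
freely homotopic to loops avoiding any given compact set. -/
def IsPeripheral {S : Type*} [TopologicalSpace S] (γ : C(Circle, S)) : Prop :=
  ∀ C : Set S, IsCompact C → ∃ γ' : C(Circle, S), γ.Homotopic γ' ∧ Set.range γ' ∩ C = ∅

/-- A free loop is null-homotopic (bounds a disc). -/
def IsNullHomotopic {S : Type*} [TopologicalSpace S] (γ : C(Circle, S)) : Prop :=
  γ.Homotopic (ContinuousMap.const Circle (γ 1))

/-! ### The marked 2-complex associated with an admissible system of loops -/

/-- All the topological and conformal data of the construction of the (marked) 2-complex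
`K = K(S₀, α₁, …, α_k)` associated with an admissible system of loops `α₁, …, α_k` on a
surface `S₀`:
* a complex structure (atlas of `ℂ`-charts) on `S₀`;
* the admissible (homotopically independent) system of simple loops `α_j`;
* the components `S_l' = Sp l` of the complement of the loops, with tubular neighbourhoods
  `U_j` of the loops and the sets `S_l'' = Sdd l`;
* the complex `K` with its connectors `c_j = conn j`, its components `S_l = comp l`, the
  enlarged punctured discs `C_j¹, C_j²` and canonical identifications `ident l` of `S_l'`
  with subsets of the components of `K`;
* a marking: complex structures on the marked components, for which the canonical
  identifications reverse orientation. -/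
structure PreComplexData (S₀ K : Type*) [TopologicalSpace S₀] [TopologicalSpace K] where
  /-- the complex structure of the Riemann surface `S₀` -/
  csS₀ : ChartedSpace ℂ S₀
  /-- the number of loops -/
  k : ℕ
  /-- the loops `α_j` -/
  αLoop : Fin k → C(Circle, S₀)
  /-- the loops are simple -/
  αSimple : ∀ j, Function.Injective (αLoop j)
  /-- the loops as subsets -/
  αSet : Fin k → Set S₀
  αSetDef : ∀ j, αSet j = Set.range (αLoop j)
  /-- the loops are pairwise disjoint -/
  αDisj : ∀ i j, i ≠ j → Disjoint (αSet i) (αSet j)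
  /-- no loop bounds a disc -/
  αNotNull : ∀ j, ¬ IsNullHomotopic (αLoop j)
  /-- no loop bounds a punctured disc -/
  αNotPeriph : ∀ j, ¬ IsPeripheral (αLoop j)
  /-- distinct loops are not freely homotopic, even after reversal -/
  αDistinct : ∀ i j, i ≠ j →
    ¬ (αLoop i).Homotopic (αLoop j) ∧ ¬ (αLoop i).Homotopic (loopReverse (αLoop j))
  /-- the number of components of the complement of the loops (and of the complex `K`) -/
  m : ℕ
  /-- the components `S_l'` of `S₀ - (α₁ ∪ ⋯ ∪ α_k)` -/
  Sp : Fin m → Set S₀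
  SpComp : ∀ l, ∃ x ∈ Set.univ \ ⋃ j, αSet j,
    Sp l = connectedComponentIn (Set.univ \ ⋃ j, αSet j) x
  SpCover : (⋃ l, Sp l) = Set.univ \ ⋃ j, αSet j
  SpInj : Function.Injective Sp
  /-- tubular neighbourhoods `U_j` of the loops -/
  U : Fin k → Set S₀
  UOpen : ∀ j, IsOpen (U j)
  UMem : ∀ j, αSet j ⊆ U j
  UDisj : ∀ i j, i ≠ j → Disjoint (U i) (U j)
  /-- the connectors `c_j` of the complex `K` -/
  conn : Fin k → Set K
  /-- the components `S_l` of the complex `K` -/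
  comp : Fin m → Set K
  compOpen : ∀ l, IsOpen (comp l)
  compConn : ∀ l, IsConnected (comp l)
  compDisj : ∀ l l', l ≠ l' → Disjoint (comp l) (comp l')
  /-- `K` is the union of its components and its connectors -/
  Kdecomp : (⋃ l, comp l) = Set.univ \ ⋃ j, conn j
  /-- the attached punctured discs, enlarged by the adjacent halves of the tubular
  neighbourhoods -/
  C1 : Fin k → Set K
  C2 : Fin k → Set K
  /-- the sets `S_l'' = S_l' - ⋃ (C_j¹ + C_j²)` -/
  Sdd : Fin m → Set S₀
  SddSub : ∀ l, Sdd l ⊆ Sp l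
  SddDef : ∀ l, Sdd l = Sp l \ ⋃ j, U j
  /-- the canonical identification of `S_l'` with a subset of the component `S_l` of `K` -/
  ident : ∀ l, C(Sp l, K)
  identRange : ∀ l, Set.range (ident l) ⊆ comp l
  identInj : ∀ l, Function.Injective (ident l)
  /-- complex structures on the sets `S_l''` induced from `S₀` -/
  csSdd : ∀ l : Fin m, ChartedSpace ℂ (Sdd l)
  holIncSdd : ∀ l, HolomorphicBetween (csSdd l) csS₀ (Subtype.val : Sdd l → S₀)

/-- A marked 2-complex: the 2-complex data together with a marking, i.e. complex
structures on some of its components for which the canonical identifications reverse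
orientation. -/
structure SurfaceComplexData (S₀ K : Type*) [TopologicalSpace S₀] [TopologicalSpace K]
    extends PreComplexData S₀ K where
  /-- the marked components -/
  marked : Set (Fin m)
  /-- the marking: complex structures on the marked components -/
  cs : ∀ l : Fin m, l ∈ marked → ChartedSpace ℂ (comp l)
  /-- the canonical identifications of marked components reverse orientation -/
  identRev : ∀ (l : Fin m) (hl : l ∈ marked) (F : Sdd l → comp l),
    (∀ x : Sdd l, (↑(F x) : K) = ident l ⟨↑x, SddSub l x.2⟩) →
    ReversesOrientation (csSdd l) (cs l hl) F

/-- A completely non-degenerate marked complex: all components are marked. -/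
def SurfaceComplexData.CompletelyMarked {S₀ K : Type*} [TopologicalSpace S₀]
    [TopologicalSpace K] (X : SurfaceComplexData S₀ K) : Prop :=
  X.marked = Set.univ

/-- A B-group `G` realizing the marked complex data `X`:
* `S₀ = Δ₀ / G`, realized by a holomorphic universal Galois covering `π₀ : Δ₀ → S₀`;
* the loops `α_j` realize (conjugacy classes of) accidental parabolic transformations;
* for each marked component `S_t⁺` of `K`, the part `Ω_t = π⁻¹(S_t⁺)` of the discontinuity
  region, realized by a holomorphic Galois covering `π_t : Ω_t → S_t⁺`;
* `Ω(G) = Δ₀ ∪ ⋃ Ω_t`, i.e. `Ω(G)/G = S₀ + Σ S_t⁺`. -/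
structure BGroupCore {S₀ K : Type*} [TopologicalSpace S₀] [TopologicalSpace K]
    (X : PreComplexData S₀ K) where
  /-- the group -/
  G : Subgroup SphereHomeo
  /-- the invariant component -/
  Δ₀ : Set RSphere
  isB : IsBGroup G Δ₀
  /-- the projection `π₀ : Δ₀ → S₀ = Δ₀/G` -/
  π₀ : C(Δ₀, S₀)
  cover₀ : IsUniversalGaloisCoveringOn G Δ₀ π₀
  hol₀ : SphHolomorphicToCharted X.csS₀ Δ₀ π₀
  /-- each loop `α_j` is covered by an accidental parabolic transformation of `G` -/
  αAPT : ∀ j : Fin X.k, ∃ g : SphereHomeo, g ∈ G ∧ g ≠ 1 ∧ IsParabolic g ∧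
    ∃ O : Δ₀, g ∈ holSet G Δ₀ π₀ O (X.αSet j)

/-- A B-group realizing the full marked complex data `X`. -/
structure BGroupOnData {S₀ K : Type*} [TopologicalSpace S₀] [TopologicalSpace K]
    (X : SurfaceComplexData S₀ K) extends BGroupCore X.toPreComplexData where
  /-- the parts `Ω_t = π⁻¹(S_t⁺)` of the discontinuity region over the marked components -/
  Ωp : ∀ l : Fin X.m, l ∈ X.marked → Set RSphere
  ΩpSub : ∀ l hl, Ωp l hl ⊆ discRegion G
  ΩpDisj₀ : ∀ l hl, Disjoint (Ωp l hl) Δ₀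
  ΩpDisj : ∀ l hl l' hl', l ≠ l' → Disjoint (Ωp l hl) (Ωp l' hl')
  /-- each `Ω_t` is a union of components of `Ω(G)` -/
  ΩpComp : ∀ l hl, ∀ x ∈ Ωp l hl, connectedComponentIn (discRegion G) x ⊆ Ωp l hl
  /-- the projections `π_t : Ω_t → S_t⁺` -/
  πp : ∀ (l : Fin X.m) (hl : l ∈ X.marked), C(Ωp l hl, X.comp l)
  coverp : ∀ l hl, IsGaloisCoveringOn G (Ωp l hl) (πp l hl)
  holp : ∀ l hl, SphHolomorphicToCharted (X.cs l hl) (Ωp l hl) (πp l hl)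
  /-- the decomposition `Ω(G)/G = S₀ + Σ S_t⁺` -/
  decomp : discRegion G = Δ₀ ∪ ⋃ l, ⋃ hl : l ∈ X.marked, Ωp l hl

/-- A good map `Φ : S₀ → K` (Main Lemma): it maps each `S_l''` into the corresponding
component `S_l` of `K`, maps the tubular neighbourhood `U_j` onto `C_j¹ + C_j² + c_j`,
and reverses orientation from `S_t''` to `S_t⁺` for every marked `t`. -/
def IsGoodMap {S₀ K : Type*} [TopologicalSpace S₀] [TopologicalSpace K]
    (X : SurfaceComplexData S₀ K) (Φ : C(S₀, K)) : Prop :=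
  (∀ l, Φ '' X.Sdd l ⊆ X.comp l) ∧
  (∀ j, Φ '' X.U j = X.C1 j ∪ X.C2 j ∪ X.conn j) ∧
  (∀ (l : Fin X.m) (hl : l ∈ X.marked) (F : X.Sdd l → X.comp l),
    (∀ x : X.Sdd l, (↑(F x) : K) = Φ ↑x) → ReversesOrientation (X.csSdd l) (X.cs l hl) F)

/-- The compatibility of a map `Φ : S₀ → K` with the holonomy (deck transformation)
isomorphisms (property (4) of the map of Lemma `lem0`): for every marked component `S_t⁺`,
every `o ∈ S_t''`, every `O ∈ π₀⁻¹(o)` and `q = Φ(o)`, there is `Q ∈ π_t⁻¹(q)` such that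
`h_O(γ) = h_Q(Φ∗γ)` for every loop `γ` in `S_t''` based at `o`. -/
def FactorCompatible {S₀ K : Type*} [TopologicalSpace S₀] [TopologicalSpace K]
    {X : SurfaceComplexData S₀ K} (D : BGroupOnData X) (Φ : C(S₀, K)) : Prop :=
  ∀ (l : Fin X.m) (hl : l ∈ X.marked) (O : D.Δ₀), D.π₀ O ∈ X.Sdd l →
    ∀ hq : Φ (D.π₀ O) ∈ X.comp l,
      ∃ Q : D.Ωp l hl, D.πp l hl Q = ⟨Φ (D.π₀ O), hq⟩ ∧
        ∀ γ : C(unitInterval, S₀), γ 0 = D.π₀ O → γ 1 = D.π₀ O → (∀ t, γ t ∈ X.Sdd l) →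
          ∀ g : SphereHomeo, g ∈ D.G →
            (∃ y : D.Δ₀, LiftsTo D.Δ₀ D.π₀ γ O y ∧ (↑y : RSphere) = g ↑O) →
            ∃ L' : C(unitInterval, D.Ωp l hl),
              (∀ t, (↑(D.πp l hl (L' t)) : K) = Φ (γ t)) ∧ L' 0 = Q ∧
              (↑(L' 1) : RSphere) = g ↑Q

/-- The factor of a completely non-degenerate B-group: the triple `(S₀, K, [φ])` where `K`
is the marked characteristic complex and `[φ]` is the homotopy class of the good map `Φ`. -/
structure FactorTriple {S₀ K : Type*} [TopologicalSpace S₀] [TopologicalSpace K]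
    (X : SurfaceComplexData S₀ K) (D : BGroupOnData X) where
  /-- a representative of the homotopy class `[φ] : S₀ → K` -/
  Φ : C(S₀, K)
  good : IsGoodMap X Φ
  compat : FactorCompatible D Φ

/-- Conformal equivalence of two factors `(S₀, K, [φ])` and `(S̃₀, K̃, [φ̃])`:
a biholomorphic map `Ψ₀ : S₀ → S̃₀` and a homeomorphism `Ψ : K → K̃` matching the (marked)
components, with `Ψ ∘ [φ] = [φ̃] ∘ Ψ₀` (as homotopy classes) and with `Ψ` biholomorphic on
each marked component. -/
def FactorConformallyEquivalent {S₀ K S₀' K' : Type*} [TopologicalSpace S₀]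
    [TopologicalSpace K] [TopologicalSpace S₀'] [TopologicalSpace K']
    (X : SurfaceComplexData S₀ K) (Φ : C(S₀, K))
    (X' : SurfaceComplexData S₀' K') (Φ' : C(S₀', K')) : Prop :=
  ∃ (Ψ₀ : S₀ ≃ₜ S₀') (Ψ : K ≃ₜ K') (e : Fin X.m ≃ Fin X'.m),
    BiholomorphicWith X.csS₀ X'.csS₀ Ψ₀ ∧
    (∀ l, Ψ '' X.comp l = X'.comp (e l)) ∧
    (∀ l, l ∈ X.marked ↔ e l ∈ X'.marked) ∧
    ContinuousMap.Homotopic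
      (ContinuousMap.comp ⟨⇑Ψ, Ψ.continuous⟩ Φ)
      (Φ'.comp ⟨⇑Ψ₀, Ψ₀.continuous⟩) ∧
    (∀ (l : Fin X.m) (hl : l ∈ X.marked) (hl' : e l ∈ X'.marked)
        (F : X.comp l ≃ₜ X'.comp (e l)),
      (∀ x, (↑(F x) : K') = Ψ ↑x) → BiholomorphicWith (X.cs l hl) (X'.cs (e l) hl') F)

/-- Two Kleinian groups are conformally conjugate on their discontinuity sets: there is a
conformal isomorphism `R : Ω(G) → Ω(G')` such that `g ↦ R ∘ g ∘ R⁻¹` is an isomorphism of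
`G` onto `G'` conjugating the two actions. -/
def ConformallyConjugateOnDisc (G G' : Subgroup SphereHomeo) : Prop :=
  ∃ R : discRegion G ≃ₜ discRegion G',
    SphHolomorphicOn (discRegion G) (fun x => (↑(R x) : RSphere)) ∧
    SphHolomorphicOn (discRegion G') (fun x => (↑(R.symm x) : RSphere)) ∧
    (∀ g ∈ G, ∃ g' ∈ G', ∀ x y : discRegion G,
      g ↑x = (↑y : RSphere) → g' ↑(R x) = (↑(R y) : RSphere)) ∧
    (∀ g' ∈ G', ∃ g ∈ G, ∀ x y : discRegion G,
      g ↑x = (↑y : RSphere) → g' ↑(R x) = (↑(R y) : RSphere))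

/-! ### Hyperbolic 3-space and geometric finiteness -/

/-- The embedding of `ℂ` into the quaternions (spanning the `1, i` plane). -/
def cq (z : ℂ) : Quaternion ℝ := ⟨z.re, z.im, 0, 0⟩

/-- Hyperbolic 3-space: the upper half-space model inside the quaternions, namely the
quaternions `z + t j` with `z ∈ ℂ` and `t > 0`. -/
def H3 : Set (Quaternion ℝ) := {q | q.imK = 0 ∧ 0 < q.imJ}

/-- The Poincaré extension to hyperbolic 3-space of the Möbius transformation with matrix
`(a b; c d)`, via the quaternion formula `w ↦ (a w + b) (c w + d)⁻¹`. -/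
def mobH3 (a b c d : ℂ) (w : Quaternion ℝ) : Quaternion ℝ :=
  (cq a * w + cq b) * (cq c * w + cq d)⁻¹

/-- The standard (closed) hyperbolic half-space, bounded by the geodesic plane over the
imaginary axis. -/
def stdHalfSpace : Set (Quaternion ℝ) := {q | q ∈ H3 ∧ q.re ≤ 0}

/-- A (closed) hyperbolic half-space in `H³`: a Möbius image of the standard one. -/
def IsHyperbolicHalfSpace (A : Set (Quaternion ℝ)) : Prop :=
  ∃ a b c d : ℂ, a * d - b * c ≠ 0 ∧ A = mobH3 a b c d '' stdHalfSpace

/-- The interior of a subset of `H³` relative to `H³`. -/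
def H3interior (P : Set (Quaternion ℝ)) : Set (Quaternion ℝ) :=
  {q | q ∈ H3 ∧ ∃ U : Set (Quaternion ℝ), IsOpen U ∧ q ∈ U ∧ U ∩ H3 ⊆ P}

/-- A group of Möbius transformations is geometrically finite if its natural (Poincaré
extension) action on hyperbolic 3-space has a finite-sided fundamental polyhedron: a
fundamental set which is the intersection with `H³` of finitely many hyperbolic
half-spaces. -/
def GeometricallyFinite (G : Subgroup SphereHomeo) : Prop :=
  ∃ P : Set (Quaternion ℝ), P ⊆ H3 ∧
    (∃ (n : ℕ) (Hs : Fin n → Set (Quaternion ℝ)),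
      (∀ i, IsHyperbolicHalfSpace (Hs i)) ∧ P = H3 ∩ ⋂ i, Hs i) ∧
    (∀ x ∈ H3, ∃ g ∈ G, ∃ a b c d : ℂ, MoebiusCoeffs a b c d g ∧
      x ∈ mobH3 a b c d '' P) ∧
    (∀ g ∈ G, g ≠ 1 → ∀ a b c d : ℂ, MoebiusCoeffs a b c d g →
      (mobH3 a b c d '' H3interior P) ∩ H3interior P = ∅)

/-! ## Statement 14 -/

/-- In a torsion-free Kleinian group, stabilizers of points of the discontinuity region are
trivial. -/
lemma eq_one_of_fix {G : Subgroup SphereHomeo} (hK : IsKleinian G) {y : RSphere}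
    (hy : y ∈ discRegion G) {g : SphereHomeo} (hg : g ∈ G) (hfix : g y = y) : g = 1 := by
  obtain ⟨U, _, hyU, hfin⟩ := hy
  have hpow : ∀ n : ℕ, (g ^ n) y = y := by
    intro n
    induction n with
    | zero => rw [pow_zero]; rfl
    | succ n ih => rw [pow_succ, homeomorph_mul_apply, hfix, ih]
  have hmaps : ∀ n : ℕ, g ^ n ∈ {g : SphereHomeo | g ∈ G ∧ ((g '' U) ∩ U).Nonempty} :=
    fun n => ⟨G.pow_mem hg n, y, ⟨y, hyU, hpow n⟩, hyU⟩
  obtain ⟨m, n, hmn, he⟩ : ∃ m n : ℕ, m < n ∧ g ^ m = g ^ n := by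
    by_contra hcon
    push Not at hcon
    have hinj : Function.Injective (fun n : ℕ => g ^ n) := by
      intro a b hab
      rcases lt_trichotomy a b with h | h | h
      · exact absurd hab (hcon a b h)
      · exact h
      · exact absurd hab.symm (hcon b a h)
    exact Set.infinite_of_injective_forall_mem hinj hmaps hfin
  refine hK.torsionFree g hg (n - m) (by omega) ?_
  have h1 : g ^ m * g ^ (n - m) = g ^ m * 1 := by
    rw [← pow_add, mul_one, Nat.add_sub_cancel' hmn.le, he]
  exact mul_left_cancel h1

/-- The orbit of a point of a component different from the invariant one meets `D` in a point
which is reached by an element of `H`. -/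
lemma exists_rep {H : Subgroup SphereHomeo} {Δs D E Δ : Set RSphere}
    (hcomp : IsComponentOf H Δs) (hinv : IsGInvariant H Δs) (hE : IsFundamentalSet H E)
    (hsub : E \ Δs ⊆ D) (hΔ : IsComponentOf H Δ) (hne : Δ ≠ Δs) {x : RSphere} (hx : x ∈ Δ) :
    ∃ h ∈ H, h x ∈ D := by
  obtain ⟨z, hz, rfl⟩ := hΔ
  obtain ⟨w, hw, rfl⟩ := hcomp
  obtain ⟨y, ⟨hyE, h, hh, rfl⟩, _⟩ := hE.2 x (connectedComponentIn_subset _ _ hx)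
  refine ⟨h, hh, hsub ⟨hyE, fun hmem => hne ?_⟩⟩
  rw [← hinv h hh] at hmem
  obtain ⟨x', hx', hxx⟩ := hmem
  have := h.injective hxx
  subst this
  rw [connectedComponentIn_eq hx, connectedComponentIn_eq hx']

/-- The one-sided version of the theorem. -/
lemma stab_side {G H : Subgroup SphereHomeo} {Δs D E Δ : Set RSphere}
    (hK : IsKleinian G) (hle : H ≤ G)
    (hcomp : IsComponentOf H Δs) (hinv : IsGInvariant H Δs) (hD : IsFundamentalSet G D)
    (hE : IsFundamentalSet H E)
    (hsub : E \ Δs ⊆ D) (hΔ : IsComponentOf H Δ) (hne : Δ ≠ Δs) :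
    setStab G Δ = setStab H Δ ∧
      (∀ x ∈ Δ, ∀ y ∈ Δ, ((∃ g ∈ G, g x = y) ↔ (∃ g ∈ H, g x = y))) := by
  have key : ∀ x ∈ Δ, ∀ g ∈ G, g x ∈ Δ → g ∈ H := by
    intro x hx g hg hgx
    obtain ⟨a, ha, hax⟩ := exists_rep hcomp hinv hE hsub hΔ hne hx
    obtain ⟨b, hb, hbx⟩ := exists_rep hcomp hinv hE hsub hΔ hne hgx
    have hinvmem : (a * g⁻¹ * b⁻¹) ∈ G :=
      G.mul_mem (G.mul_mem (hle ha) (G.inv_mem hg)) (G.inv_mem (hle hb))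
    have happ : (a * g⁻¹ * b⁻¹ : SphereHomeo) (b (g x)) = a x := by simp
    have hΩ := hD.1 hbx
    have heq : a x = b (g x) :=
      (hD.2 _ hΩ).unique ⟨hax, _, hinvmem, happ⟩ ⟨hbx, 1, G.one_mem, rfl⟩
    have h1 := eq_one_of_fix hK hΩ hinvmem (happ.trans heq)
    have h2 : g = b⁻¹ * a := by
      have h3 : a * g⁻¹ = b := by rw [mul_inv_eq_one] at h1; exact h1
      rw [← h3]; group
    rw [h2]
    exact H.mul_mem (H.inv_mem hb) ha
  obtain ⟨x₀, hx₀⟩ : Δ.Nonempty := by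
    obtain ⟨z, hz, rfl⟩ := hΔ
    exact ⟨z, mem_connectedComponentIn hz⟩
  refine ⟨?_, ?_⟩
  · ext g
    constructor
    · rintro ⟨hg, hgΔ⟩
      exact ⟨key x₀ hx₀ g hg (hgΔ ▸ Set.mem_image_of_mem g hx₀), hgΔ⟩
    · rintro ⟨hg, hgΔ⟩
      exact ⟨hle hg, hgΔ⟩
  · intro x hx y hy
    constructor
    · rintro ⟨g, hg, rfl⟩
      exact ⟨g, key x hx g hg hy, rfl⟩
    · rintro ⟨g, hg, rfl⟩
      exact ⟨g, hle hg, rfl⟩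

/-- (Maskit's dividing-loop construction, stabilizers.) In the setting of the dividing
loop construction (`G` a non-degenerate B-group, `G₁, G₂ ≤ G`, fundamental sets with
`D - Δ₀ = (D₁ - Δ₀₁*) + (D₂ - Δ₀₂*)`), for every non-invariant component `Δ` of `Ω(G_i)`
different from `Δ₀ᵢ*` (for `i = 1` or `2`), the stabilizer of `Δ` in `G` coincides with
its stabilizer in `G_i`: `G_Δ = G_{i,Δ}`. In particular, two points `x₁, x₂ ∈ Δ` are
`G`-equivalent if and only if they are `G_i`-equivalent. -/
theorem stabilizers_in_dividing_loop_construction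
    (G G₁ G₂ : Subgroup SphereHomeo) (Δ₀ Δ₁s Δ₂s : Set RSphere)
    (hB : IsBGroup G Δ₀) (hnondeg : discRegion G ≠ Δ₀)
    (hle₁ : G₁ ≤ G) (hle₂ : G₂ ≤ G)
    (hcomp₁ : IsComponentOf G₁ Δ₁s) (hinv₁ : IsGInvariant G₁ Δ₁s)
    (hcomp₂ : IsComponentOf G₂ Δ₂s) (hinv₂ : IsGInvariant G₂ Δ₂s)
    (D D₁ D₂ : Set RSphere)
    (hD : IsFundamentalSet G D) (hD₁ : IsFundamentalSet G₁ D₁)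
    (hD₂ : IsFundamentalSet G₂ D₂)
    (heq : D \ Δ₀ = (D₁ \ Δ₁s) ∪ (D₂ \ Δ₂s))
    (hdisj : Disjoint (D₁ \ Δ₁s) (D₂ \ Δ₂s)) :
    (∀ Δ : Set RSphere, IsComponentOf G₁ Δ → Δ ≠ Δ₁s → ¬ IsGInvariant G₁ Δ →
      setStab G Δ = setStab G₁ Δ ∧
      (∀ x ∈ Δ, ∀ y ∈ Δ, ((∃ g ∈ G, g x = y) ↔ (∃ g ∈ G₁, g x = y)))) ∧
    (∀ Δ : Set RSphere, IsComponentOf G₂ Δ → Δ ≠ Δ₂s → ¬ IsGInvariant G₂ Δ →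
      setStab G Δ = setStab G₂ Δ ∧
      (∀ x ∈ Δ, ∀ y ∈ Δ, ((∃ g ∈ G, g x = y) ↔ (∃ g ∈ G₂, g x = y)))) := by
  have hs₁ : D₁ \ Δ₁s ⊆ D := fun x hx =>
    (show x ∈ D \ Δ₀ by rw [heq]; exact Or.inl hx).1
  have hs₂ : D₂ \ Δ₂s ⊆ D := fun x hx =>
    (show x ∈ D \ Δ₀ by rw [heq]; exact Or.inr hx).1
  exact ⟨fun Δ hΔ hne _ => stab_side hB.kleinian hle₁ hcomp₁ hinv₁ hD hD₁ hs₁ hΔ hne,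
    fun Δ hΔ hne _ => stab_side hB.kleinian hle₂ hcomp₂ hinv₂ hD hD₂ hs₂ hΔ hne⟩
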